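/- Let p ≥ 1, r ≥ 1 and n ≥ 1 be integers. Consider the alphabet consisting of letters a_1, …, a_p and b. For each i let ε_i ∈ {+1, −1} and let W_i be a nonempty reduced word in the letters a_1, …, a_p, and set W = b^{ε_1} W_1 b^{ε_2} W_2 ⋯ b^{ε_r} W_r. Suppose that W_1, …, W_r freely generate a subgroup of the free group on a_1, …, a_p (this guarantees the injectivity hypothesis on the separating graph ∂A). Let G = ⟨a_1, …, a_p, b ∣ W^n⟩. Then every nonempty reduced word P over the alphabet {a_1, …, a_p, b} representing the trivial element of G contains a contiguous subword Q for which there exists a word S such that the concatenation Q·S is, as a word, a cyclic conjugate of the word W^n or of the inverse word of W^n, and the letter b (with either exponent +1 or −1) occurs at most once in S. -/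

import Mathlib

/-- A word over the alphabet `α` (a list of letters with exponents `±1`) is *reduced*
if it contains no adjacent pair of the form `(s, e) (s, ¬e)`. -/
def WordReduced {α : Type*} (w : List (α × Bool)) : Prop :=
  List.Chain' (fun p q => ¬(p.1 = q.1 ∧ p.2 = !q.2)) w

/-- Re-express a word over the alphabet `α` as a word over a larger alphabet `β`
via a map `f : α → β` of alphabets. -/
def embedWord {α β : Type*} (f : α → β) (w : List (α × Bool)) : List (β × Bool) :=
  w.map fun p => (f p.1, p.2)

/-- The inverse of a word: reverse the list and negate each exponent. -/
def wordInv {α : Type*} (w : List (α × Bool)) : List (α × Bool) :=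
  (w.map fun p => (p.1, !p.2)).reverse

/-- The `n`-th power of a word: the word concatenated with itself `n` times. -/
def wordPow {α : Type*} (w : List (α × Bool)) (n : ℕ) : List (α × Bool) :=
  (List.replicate n w).flatten

/-- The word `W = b^{ε₁} W₁ b^{ε₂} W₂ ⋯ b^{ε_r} W_r` over the alphabet
`Fin p ⊕ Unit`, where `Sum.inl i` is the generator `aᵢ`, `Sum.inr ()` is `b`,
and the Boolean `ε i` records the sign of the exponent `±1` of the `i`-th
occurrence of `b`. -/
def bWord (p r : ℕ) (ε : Fin r → Bool) (Wi : Fin r → List (Fin p × Bool)) :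
    List ((Fin p ⊕ Unit) × Bool) :=
  ((List.finRange r).map fun i =>
    ((Sum.inr (), ε i) : (Fin p ⊕ Unit) × Bool) :: embedWord Sum.inl (Wi i)).flatten

/-!
Let `E` be the free product of `⟨b⟩ × ⟨y⟩` and `⟨u⟩`, where `b` has infinite order, `y` has order
`r` and `u` has order `n r`. Interpreting `x_i` as `b^{-ε_i} y^{-i} u y^{i+1}` turns `b^{ε_1} x_1
⋯ b^{ε_r} x_r` into a conjugate of `u^r`, whose `n`-th power is trivial. In a reduced word in `b`
and the `x_i` two consecutive letters `u^{±1}` merge only where the word follows the cyclic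
relator or its inverse, so by the normal form theorem the word survives in `E` unless it contains
a subword of the cyclic relator or its inverse that stretches over all but one of the letters `b`.

In particular the `x_i` freely generate a subgroup of `E`, as the `W_i` do in the free group on
the `a_j`, so the two groups can be amalgamated along `x_i = W_i`. The given relator is trivial in
the amalgamated product. A reduced word `P` is evaluated there by pulling its maximal stretches of
syllables in `⟨W_1, …, W_r⟩` back to words in `b` and the `x_i`, and the normal form theorem
applies unless such a word, and with it `P`, contains one of these long subwords.
-/

/-! ### Amalgamated products -/

section AmalgamatedProducts

open Monoid

theorem exists_reduced_prod_eq_of_mul {ι H : Type*} {G : ι → Type*} [∀ i, Group (G i)] [Group H]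
    {φ : ∀ i, H →* G i} {i : ι} {g : G i} {w : CoprodI.Word G} (hg : g ∉ (φ i).range)
    (hw : PushoutI.Reduced φ w) (hi : w.fstIdx ≠ some i) :
    ∃ w' : CoprodI.Word G, PushoutI.Reduced φ w' ∧ w'.fstIdx = some i ∧
      (PushoutI.ofCoprodI w'.prod : PushoutI φ) = PushoutI.of i g * PushoutI.ofCoprodI w.prod := by
  have hg1 : g ≠ 1 := fun h => hg (h ▸ one_mem _)
  exact ⟨CoprodI.Word.cons g w hi hg1, List.forall_mem_cons.2 ⟨hg, hw⟩,
    CoprodI.Word.fstIdx_cons _ _ _ _, by simp [CoprodI.Word.prod_cons]⟩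

theorem ofCoprodI_prod_notMem_range_of {ι H : Type*} {G : ι → Type*} [∀ i, Group (G i)] [Group H]
    {φ : ∀ i, H →* G i} (hφ : ∀ i, Function.Injective (φ i)) {w : CoprodI.Word G}
    (hw : PushoutI.Reduced φ w) (hne : w ≠ CoprodI.Word.empty) {i : ι} (hi : w.fstIdx ≠ some i) :
    PushoutI.ofCoprodI w.prod ∉ (PushoutI.of i : G i →* PushoutI φ).range := by
  rintro ⟨g, hg⟩
  by_cases hgr : g ∈ (φ i).range
  · obtain ⟨k, rfl⟩ := hgr
    exact hne (hw.eq_empty_of_mem_range hφ ⟨k, hg ▸ (PushoutI.of_apply_eq_base φ i k).symm⟩)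
  · have hg' : g⁻¹ ∉ (φ i).range := fun h => hgr (inv_mem_iff.1 h)
    obtain ⟨w', hw', hi', hprod⟩ := exists_reduced_prod_eq_of_mul hg' hw hi
    have hempty : w' = CoprodI.Word.empty := hw'.eq_empty_of_mem_range hφ (by simp [hprod, ← hg])
    simp [hempty, CoprodI.Word.fstIdx, CoprodI.Word.empty] at hi'

universe u

/-- The two factors of an amalgamated product, as a family indexed by `Bool`: `true` stands for the
left factor and `false` for the right one. -/
def amalgamFactor (A B : Type u) : Bool → Type u
  | true => A
  | false => B

instance amalgamFactor.instGroup (A B : Type u) [Group A] [Group B] :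
    ∀ i, Group (amalgamFactor A B i)
  | true => inferInstanceAs (Group A)
  | false => inferInstanceAs (Group B)

variable {A B : Type u} {K : Type*} [Group A] [Group B] [Group K]

/-- The maps `α` and `β` from the amalgamated subgroup to the two factors, as a family indexed by
`Bool`. -/
def amalgamMap (α : K →* A) (β : K →* B) : ∀ i, K →* amalgamFactor A B i
  | true => α
  | false => β

/-- The amalgamated product of `A` and `B` over `K`, with respect to `α : K →* A` and
`β : K →* B`. -/
abbrev Amalgam (α : K →* A) (β : K →* B) : Type _ :=
  PushoutI (amalgamMap α β)

namespace Amalgam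

variable {α : K →* A} {β : K →* B}

/-- The canonical map from the left factor to the amalgamated product. -/
def inl : A →* Amalgam α β :=
  PushoutI.of (φ := amalgamMap α β) true

/-- The canonical map from the right factor to the amalgamated product. -/
def inr : B →* Amalgam α β :=
  PushoutI.of (φ := amalgamMap α β) false

theorem inl_apply_eq_inr_apply (k : K) : (inl (α k) : Amalgam α β) = inr (β k) :=
  (PushoutI.of_apply_eq_base (amalgamMap α β) true k).trans
    (PushoutI.of_apply_eq_base (amalgamMap α β) false k).symm

theorem amalgamMap_injective (hα : Function.Injective α) (hβ : Function.Injective β) :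
    ∀ i, Function.Injective (amalgamMap α β i)
  | true => hα
  | false => hβ

theorem inl_injective (hα : Function.Injective α) (hβ : Function.Injective β) :
    Function.Injective (inl : A →* Amalgam α β) :=
  PushoutI.of_injective (amalgamMap_injective hα hβ) true

/-- The elements of an amalgamated product that are the product of a reduced expression not starting
in the right factor, the last left syllable being allowed to be arbitrary. -/
def IsTail (t : Amalgam α β) : Prop :=
  ∃ w : CoprodI.Word (amalgamFactor A B), PushoutI.Reduced (amalgamMap α β) w ∧
    w.fstIdx ≠ some false ∧ ∃ a : A, t = PushoutI.ofCoprodI w.prod * inl a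

theorem isTail_inl (a : A) : IsTail (inl a : Amalgam α β) :=
  ⟨CoprodI.Word.empty, by simp [PushoutI.Reduced, CoprodI.Word.empty],
    by simp [CoprodI.Word.fstIdx, CoprodI.Word.empty], a, by simp⟩

theorem IsTail.exists_inr_mul {t : Amalgam α β} (ht : IsTail t) {b : B} (hb : b ∉ β.range) :
    ∃ w : CoprodI.Word (amalgamFactor A B), PushoutI.Reduced (amalgamMap α β) w ∧
      w.fstIdx = some false ∧ ∃ a : A, inr b * t = PushoutI.ofCoprodI w.prod * inl a := by
  obtain ⟨w, hw, hi, a, rfl⟩ := ht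
  obtain ⟨w', hw', hi', hprod⟩ :=
    exists_reduced_prod_eq_of_mul (i := false) (φ := amalgamMap α β) (g := b) hb hw hi
  exact ⟨w', hw', hi', a, by rw [hprod, ← mul_assoc]; rfl⟩

theorem IsTail.inl_mul_inr_mul {t : Amalgam α β} (ht : IsTail t) {a : A} {b : B}
    (ha : a ∉ α.range) (hb : b ∉ β.range) : IsTail (inl a * inr b * t) := by
  obtain ⟨w, hw, hi, c, hc⟩ := ht.exists_inr_mul hb
  obtain ⟨w', hw', hi', hprod⟩ := exists_reduced_prod_eq_of_mul (i := true)
    (φ := amalgamMap α β) (g := a) ha hw (by simp [hi])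
  exact ⟨w', hw', by simp [hi'], c, by rw [mul_assoc, hc, hprod, ← mul_assoc]; rfl⟩

theorem IsTail.inr_mul_notMem_range_inl (hα : Function.Injective α) (hβ : Function.Injective β)
    {t : Amalgam α β} (ht : IsTail t) {b : B} (hb : b ∉ β.range) :
    inr b * t ∉ (inl : A →* Amalgam α β).range := by
  obtain ⟨w, hw, hi, a, ha⟩ := ht.exists_inr_mul hb
  have hne : w ≠ CoprodI.Word.empty := by
    rintro rfl
    simp [CoprodI.Word.fstIdx, CoprodI.Word.empty] at hi
  rw [ha, Subgroup.mul_mem_cancel_right _ (MonoidHom.mem_range.2 ⟨a, rfl⟩)]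
  exact ofCoprodI_prod_notMem_range_of (amalgamMap_injective hα hβ) hw hne (by simp [hi])

end Amalgam

end AmalgamatedProducts

/-! ### Subwords of the cyclic relator -/

section CyclicIndices

theorem add_one_iterate_mul_card {r : ℕ} [NeZero r] (n : ℕ) (i : Fin r) :
    (· + 1)^[n * r] i = i := by
  have hr : r • (1 : Fin r) = 0 := by simpa using card_nsmul_eq_zero' (G := Fin r) (x := 1)
  rw [add_right_iterate_apply, mul_nsmul', hr, nsmul_zero, add_zero]

theorem add_one_iterate_val {r : ℕ} [NeZero r] (i : Fin r) : (· + 1)^[(i : ℕ)] 0 = i := by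
  have hval (k : ℕ) : (((· + 1)^[k] 0 : Fin r) : ℕ) = k % r := by
    induction k with
    | zero => simp
    | succ k ih => rw [Function.iterate_succ_apply', Fin.val_add, ih, Fin.val_one', ← Nat.add_mod]
  exact Fin.ext ((hval i).trans (Nat.mod_eq_of_lt i.isLt))

theorem finRange_eq_iterate (r : ℕ) [NeZero r] :
    List.finRange r = List.iterate (· + 1) (0 : Fin r) r :=
  List.ext_getElem (by simp) fun k hk _ => by
    rw [List.getElem_finRange, List.getElem_iterate]
    exact (add_one_iterate_val ⟨k, by simpa using hk⟩).symm

/-- The index following `i` when the relator is read forwards (`true`) or backwards (`false`). -/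
def nextIndex {r : ℕ} [NeZero r] : Bool → Fin r → Fin r
  | true, i => i + 1
  | false, i => i - 1

end CyclicIndices

section Words

variable {α : Type*} {r : ℕ} (ε : Fin r → Bool) (W : Fin r → List (α × Bool))

/-- The letter `b` with the exponent sign `δ`. -/
def bLetter (δ : Bool) : (α ⊕ Unit) × Bool :=
  (Sum.inr (), δ)

/-- The subword `b^{ε_i} W_i` of the relator. -/
def relatorSegment (i : Fin r) : List ((α ⊕ Unit) × Bool) :=
  bLetter (ε i) :: embedWord Sum.inl (W i)

/-- The word `b^{ε_1} W_1 ⋯ b^{ε_r} W_r`, over an arbitrary alphabet. -/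
def relatorWord : List ((α ⊕ Unit) × Bool) :=
  ((List.finRange r).map (relatorSegment ε W)).flatten

/-- The word `w` read forwards (`true`), or its inverse word (`false`). -/
def signedWord : Bool → List (α × Bool) → List (α × Bool)
  | true, w => w
  | false, w => FreeGroup.invRev w

theorem countP_isRight_relatorSegment (i : Fin r) :
    (relatorSegment ε W i).countP (·.1.isRight) = 1 := by
  simp [relatorSegment, bLetter, embedWord, List.countP_cons]

theorem countP_isRight_wordPow_relatorWord (n : ℕ) :
    (wordPow (relatorWord ε W) n).countP (·.1.isRight) = n * r := by
  simp [wordPow, relatorWord, List.countP_flatten, Function.comp_def,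
    countP_isRight_relatorSegment]

/-- The words `W_i = x_i`, which turn `relatorWord` into the relator of the model group. -/
def letterWord (i : Fin r) : List (Fin r × Bool) :=
  [(i, true)]

theorem embedWord_signedWord_letterWord (s : Bool) (i : Fin r) :
    (embedWord Sum.inl (signedWord s (letterWord i)) : List ((Fin r ⊕ Unit) × Bool)) =
      [(Sum.inl i, s)] := by
  cases s <;> rfl

variable [NeZero r]

/-- The exponent sign of the letter `b` that follows `W_i` in the cyclic relator (`true`), or
`W_i⁻¹` in the inverse of the cyclic relator (`false`). -/
def turnSign : Bool → Fin r → Bool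
  | true, i => ε (i + 1)
  | false, i => !ε i

/-- The subword of the cyclic relator (if `s` is `true`) or of its inverse (if `s` is `false`) that
starts with the letter `b` following `W_i^{±1}`, ends with a letter `b`, and contains `m + 1`
letters `b`. -/
def relatorArc (s : Bool) : Fin r → ℕ → List ((α ⊕ Unit) × Bool)
  | i, 0 => [bLetter (turnSign ε s i)]
  | i, m + 1 => bLetter (turnSign ε s i) ::
      (embedWord Sum.inl (signedWord s (W (nextIndex s i))) ++ relatorArc s (nextIndex s i) m)

theorem exists_relatorArc_eq_cons (s : Bool) (i : Fin r) (m : ℕ) :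
    ∃ L, relatorArc ε W s i m = bLetter (turnSign ε s i) :: L := by
  cases m <;> exact ⟨_, rfl⟩

/-- No subword of `P` is an arc with `m + 1` letters `b`. -/
def ArcFree (m : ℕ) (P : List ((α ⊕ Unit) × Bool)) : Prop :=
  ∀ s i, ¬ relatorArc ε W s i m <:+: P

variable {ε W} in
theorem ArcFree.infix {m : ℕ} {P Q : List ((α ⊕ Unit) × Bool)} (hP : ArcFree ε W m P)
    (hQ : Q <:+: P) : ArcFree ε W m Q :=
  fun s i h => hP s i (h.trans hQ)

/-- The subword of the cyclic relator consisting of the `q` segments that start at `i`. -/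
def relatorPath (i : Fin r) (q : ℕ) : List ((α ⊕ Unit) × Bool) :=
  (List.iterate (· + 1) i q).flatMap (relatorSegment ε W)

theorem relatorPath_succ (i : Fin r) (q : ℕ) :
    relatorPath ε W i (q + 1) = relatorSegment ε W i ++ relatorPath ε W (i + 1) q :=
  List.flatMap_cons

theorem relatorPath_add (i : Fin r) (p q : ℕ) :
    relatorPath ε W i (p + q) = relatorPath ε W i p ++ relatorPath ε W ((· + 1)^[p] i) q := by
  rw [relatorPath, List.iterate_add, List.flatMap_append]
  rfl

theorem relatorWord_eq_relatorPath : relatorWord ε W = relatorPath ε W 0 r := by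
  rw [relatorWord, finRange_eq_iterate, ← List.flatMap_def]
  rfl

theorem wordPow_relatorWord (n : ℕ) :
    wordPow (relatorWord ε W) n = relatorPath ε W 0 (n * r) := by
  induction n with
  | zero => simp [wordPow, relatorPath]
  | succ n ih =>
    rw [Nat.succ_mul, relatorPath_add, add_one_iterate_mul_card, ← ih, ← relatorWord_eq_relatorPath,
      wordPow, List.replicate_succ', List.flatten_concat]
    rfl

theorem relatorPath_isRotated_wordPow (n : ℕ) (i : Fin r) :
    relatorPath ε W i (n * r) ~r wordPow (relatorWord ε W) n := by
  rw [wordPow_relatorWord, ← add_one_iterate_val i]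
  induction (i : ℕ) with
  | zero => rfl
  | succ k ih =>
    refine List.IsRotated.trans ?_ ih
    rw [Function.iterate_succ_apply']
    generalize (· + 1)^[k] (0 : Fin r) = j
    rcases hq : n * r with _ | q
    · rfl
    · have hj : (· + 1)^[q + 1] j = j := hq ▸ add_one_iterate_mul_card n j
      rw [Function.iterate_succ_apply] at hj
      have hsingle : relatorPath ε W j 1 = relatorSegment ε W j := by simp [relatorPath]
      rw [relatorPath_add, hj, hsingle, relatorPath_succ]
      exact List.isRotated_append

theorem relatorArc_append (i : Fin r) (m : ℕ) :
    relatorArc ε W true i m ++ (embedWord Sum.inl (W ((· + 1)^[m + 1] i)) ++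
      relatorSegment ε W ((· + 1)^[m + 2] i)) = relatorPath ε W (i + 1) (m + 2) := by
  induction m generalizing i with
  | zero => simp [relatorArc, relatorPath, relatorSegment, turnSign]
  | succ m ih =>
    rw [relatorPath_succ, ← ih (i + 1), relatorArc, Function.iterate_succ_apply (· + 1),
      Function.iterate_succ_apply (· + 1) (m + 2)]
    simp only [relatorSegment, List.cons_append, List.append_assoc, turnSign, signedWord, nextIndex]

theorem relatorArc_succ_eq_append (s : Bool) (i : Fin r) (m : ℕ) :
    relatorArc ε W s i (m + 1) = relatorArc ε W s i m ++
      (embedWord Sum.inl (signedWord s (W ((nextIndex s)^[m + 1] i))) ++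
        [bLetter (turnSign ε s ((nextIndex s)^[m + 1] i))]) := by
  induction m generalizing i with
  | zero => simp [relatorArc]
  | succ m ih =>
    rw [relatorArc, ih (nextIndex s i), relatorArc]
    simp only [List.cons_append, List.append_assoc, Function.iterate_succ_apply]

theorem embedWord_invRev {β : Type*} (f : α → β) (w : List (α × Bool)) :
    embedWord f (FreeGroup.invRev w) = FreeGroup.invRev (embedWord f w) := by
  simp [embedWord, FreeGroup.invRev, Function.comp_def]

theorem invRev_relatorArc (i : Fin r) (m : ℕ) :
    FreeGroup.invRev (relatorArc ε W true i m) =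
      relatorArc ε W false ((nextIndex true)^[m + 1] i) m := by
  have hinv : Function.LeftInverse (nextIndex false) (nextIndex true : Fin r → Fin r) :=
    fun j => add_sub_cancel_right j 1
  induction m generalizing i with
  | zero => simp [relatorArc, FreeGroup.invRev, turnSign, bLetter, nextIndex]
  | succ m ih =>
    rw [Function.iterate_succ_apply, relatorArc_succ_eq_append ε W false, hinv.iterate (m + 1),
      ← ih, relatorArc, FreeGroup.invRev_cons, FreeGroup.invRev_append, ← embedWord_invRev]
    simp [FreeGroup.invRev, turnSign, bLetter, nextIndex, signedWord]

theorem exists_relatorArc_append_isRotated {n m : ℕ} (hm : n * r = m + 2) (s : Bool) (i : Fin r) :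
    ∃ S : List ((α ⊕ Unit) × Bool),
      ((relatorArc ε W s i m ++ S) ~r wordPow (relatorWord ε W) n ∨
        (relatorArc ε W s i m ++ S) ~r wordInv (wordPow (relatorWord ε W) n)) ∧
      S.countP (·.1.isRight) ≤ 1 := by
  have hforward (j : Fin r) : ∃ S : List ((α ⊕ Unit) × Bool),
      (relatorArc ε W true j m ++ S) ~r wordPow (relatorWord ε W) n ∧
        S.countP (·.1.isRight) = 1 := by
    refine ⟨embedWord Sum.inl (W ((· + 1)^[m + 1] j)) ++ relatorSegment ε W ((· + 1)^[m + 2] j),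
      ?_, ?_⟩
    · rw [relatorArc_append, ← hm]
      exact relatorPath_isRotated_wordPow ε W n _
    · simp [embedWord, countP_isRight_relatorSegment]
  cases s with
  | true =>
    obtain ⟨S, hrot, hS⟩ := hforward i
    exact ⟨S, Or.inl hrot, hS.le⟩
  | false =>
    have hinv : Function.RightInverse (nextIndex false) (nextIndex true : Fin r → Fin r) :=
      fun j => sub_add_cancel j 1
    obtain ⟨S, hrot, hS⟩ := hforward ((nextIndex false)^[m + 1] i)
    refine ⟨FreeGroup.invRev S, Or.inr ?_, ?_⟩
    · rw [← hinv.iterate (m + 1) i, ← invRev_relatorArc]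
      refine List.isRotated_append.trans ?_
      rw [← FreeGroup.invRev_append]
      exact (hrot.map _).reverse
    · simpa [FreeGroup.invRev, Function.comp_def] using hS.le

end Words

/-! ### The model group -/

/-- The integer `±1` encoded by a Boolean exponent. -/
def boolSign : Bool → ℤ
  | true => 1
  | false => -1

/-- The free product `(⟨b⟩ × ⟨y⟩) * ⟨u⟩`, with `b` of infinite order, `y` of order `r` and `u` of
order `N`. Sending `x_i` to `b^{-ε_i} y^{-i} u y^{i+1}`, it models the one-relator group with
relator `(b^{ε_1} x_1 ⋯ b^{ε_r} x_r)^n` when `N = n r`. -/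
abbrev ModelGroup (r N : ℕ) [NeZero r] : Type :=
  Amalgam (1 : Unit →* Multiplicative (ℤ × Fin r)) (1 : Unit →* Multiplicative (ZMod N))

theorem boolSign_not (s : Bool) : boolSign (!s) = -boolSign s := by
  cases s <;> rfl

namespace ModelGroup

variable {r N : ℕ} [NeZero r]

/-- The element `b ^ v.1 * y ^ v.2`. -/
def base (v : ℤ × Fin r) : ModelGroup r N :=
  Amalgam.inl (Multiplicative.ofAdd v)

/-- The element `u ^ k`. -/
def uPow (k : ℤ) : ModelGroup r N :=
  Amalgam.inr (Multiplicative.ofAdd (k : ZMod N))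

theorem base_add (v w : ℤ × Fin r) : (base (v + w) : ModelGroup r N) = base v * base w :=
  map_mul _ _ _

theorem base_neg (v : ℤ × Fin r) : (base (-v) : ModelGroup r N) = (base v)⁻¹ :=
  map_inv _ _

theorem base_zero : (base 0 : ModelGroup r N) = 1 :=
  map_one _

theorem uPow_add (k l : ℤ) : (uPow (k + l) : ModelGroup r N) = uPow k * uPow l := by
  rw [uPow, Int.cast_add, ofAdd_add, map_mul]
  rfl

theorem uPow_zero : (uPow 0 : ModelGroup r N) = 1 := by
  simp [uPow]

theorem uPow_neg (k : ℤ) : (uPow (-k) : ModelGroup r N) = (uPow k)⁻¹ := by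
  rw [uPow, Int.cast_neg, ofAdd_neg, map_inv]
  rfl

theorem one_injective_of_unit {G : Type*} [Group G] : Function.Injective (1 : Unit →* G) :=
  Function.injective_of_subsingleton _

theorem base_injective : Function.Injective (base : ℤ × Fin r → ModelGroup r N) :=
  (Amalgam.inl_injective one_injective_of_unit one_injective_of_unit).comp
    Multiplicative.ofAdd.injective

theorem ofAdd_boolSign_mul_notMem_range {ℓ : ℕ} (hpos : 0 < ℓ) (hlt : ℓ < N) (s : Bool) :
    Multiplicative.ofAdd ((boolSign s * ℓ : ℤ) : ZMod N) ∉
      (1 : Unit →* Multiplicative (ZMod N)).range := by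
  rintro ⟨_, h⟩
  have hzero : ((boolSign s * ℓ : ℤ) : ZMod N) = 0 := (ofAdd_eq_one.1 h.symm)
  rw [ZMod.intCast_zmod_eq_zero_iff_dvd] at hzero
  have hdvd : N ∣ ℓ := by cases s <;> simpa [boolSign, Int.natCast_dvd_natCast] using hzero
  exact absurd (Nat.le_of_dvd hpos hdvd) hlt.not_ge

theorem isTail_base (v : ℤ × Fin r) : Amalgam.IsTail (base v : ModelGroup r N) :=
  Amalgam.isTail_inl _

theorem isTail_base_mul_uPow_mul {v : ℤ × Fin r} (hv : v ≠ 0) {ℓ : ℕ} (hpos : 0 < ℓ) (hlt : ℓ < N)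
    (s : Bool) {t : ModelGroup r N} (ht : Amalgam.IsTail t) :
    Amalgam.IsTail (base v * uPow (boolSign s * ℓ) * t) :=
  ht.inl_mul_inr_mul (fun ⟨_, h⟩ => hv (ofAdd_eq_one.1 h.symm))
    (ofAdd_boolSign_mul_notMem_range hpos hlt s)

theorem uPow_mul_ne_base {ℓ : ℕ} (hpos : 0 < ℓ) (hlt : ℓ < N) (s : Bool)
    {t : ModelGroup r N} (ht : Amalgam.IsTail t) (v : ℤ × Fin r) :
    uPow (boolSign s * ℓ) * t ≠ base v := fun h =>
  ht.inr_mul_notMem_range_inl one_injective_of_unit one_injective_of_unit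
    (ofAdd_boolSign_mul_notMem_range hpos hlt s) ⟨_, h.symm⟩

variable (ε : Fin r → Bool)

/-- The exponents of the element `v` of `⟨b⟩ × ⟨y⟩` to the left of `u^{±1}` in
`x_i = v u v'⁻¹` (`true`) or `x_i⁻¹ = v u⁻¹ v'⁻¹` (`false`). -/
def corner (i : Fin r) : Bool → ℤ × Fin r
  | true => (-boolSign (ε i), -i)
  | false => (0, -(i + 1))

/-- Interprets the letters `x_1, …, x_r, b` in the model group. -/
def hom (N : ℕ) : FreeGroup (Fin r ⊕ Unit) →* ModelGroup r N :=
  FreeGroup.lift (Sum.elim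
    (fun i => base (corner ε i true) * uPow 1 * (base (corner ε i false))⁻¹)
    fun _ => base (1, 0))

theorem hom_inl (i : Fin r) (s : Bool) :
    hom ε N (FreeGroup.mk [(Sum.inl i, s)]) =
      base (corner ε i s) * uPow (boolSign s) * base (-corner ε i (!s)) := by
  cases s <;> simp [hom, boolSign, base_neg, uPow_neg, mul_assoc]

theorem hom_replicate_bLetter (δ : Bool) (k : ℕ) :
    hom ε N (FreeGroup.mk (List.replicate k (bLetter δ))) = base (boolSign δ * k, 0) := by
  induction k with
  | zero =>
    rw [Nat.cast_zero, mul_zero]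
    exact (base_zero (r := r)).symm
  | succ k ih =>
    have hb : hom ε N (FreeGroup.mk [bLetter δ]) = base (boolSign δ, 0) := by
      cases δ <;> simp [hom, boolSign, bLetter, ← base_neg]
    rw [List.replicate_succ, ← List.singleton_append, ← FreeGroup.mul_mk, map_mul, ih, hb,
      ← base_add]
    congr 1
    simp [mul_add, add_comm]

theorem corner_merge {i j : Fin r} {s t : Bool} {e : ℤ}
    (h : -corner ε i (!s) + (e, 0) + corner ε j t = 0) :
    (t = s ∧ j = nextIndex s i ∧ e = boolSign (turnSign ε s i)) ∨ (t = !s ∧ j = i ∧ e = 0) := by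
  cases s <;> cases t <;>
    simp only [corner, nextIndex, turnSign, Bool.not_true, Bool.not_false, Prod.neg_mk,
      Prod.mk_add_mk, Prod.mk_eq_zero, neg_neg, neg_zero, zero_add, add_zero, reduceCtorEq,
      true_and, false_and, or_false, false_or] at h ⊢ <;>
    obtain ⟨h₁, h₂⟩ := h
  case false.false =>
    have hj : i - 1 = j := sub_eq_zero.1 (by rw [← h₂]; abel)
    exact ⟨hj.symm, by rw [boolSign_not]; omega⟩
  case false.true =>
    have hj : i = j := eq_of_add_neg_eq_zero h₂
    subst hj
    exact ⟨rfl, by omega⟩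
  case true.false =>
    exact ⟨(add_right_cancel (eq_of_add_neg_eq_zero h₂)).symm, h₁⟩
  case true.true =>
    have hj : i + 1 = j := eq_of_add_neg_eq_zero h₂
    subst hj
    exact ⟨rfl, eq_of_add_neg_eq_zero h₁⟩

theorem corner_turn (s : Bool) (i : Fin r) :
    -corner ε i (!s) + (boolSign (turnSign ε s i), 0) + corner ε (nextIndex s i) s = 0 := by
  cases s <;> simp [corner, nextIndex, turnSign, boolSign_not]

/-- The word `x_i^s R` starts with the first `ℓ` letters `x` of a run `x_i^s b^± x_{i±1}^s b^± ⋯` of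
the cyclic relator or its inverse, and its image in the model group is `v u^{±ℓ} t` for the left
corner `v` of `x_i^s` and a tail `t`. -/
structure BeginsRun (m : ℕ) (i : Fin r) (s : Bool) (ℓ : ℕ) (R : List ((Fin r ⊕ Unit) × Bool)) :
    Prop where
  pos : 0 < ℓ
  lt : ℓ < m + 2
  arc_prefix : ∀ k, k + 2 ≤ ℓ → relatorArc ε letterWord s i k <+: R
  exists_tail : ∃ t : ModelGroup r (m + 2), Amalgam.IsTail t ∧
    hom ε (m + 2) (FreeGroup.mk ((Sum.inl i, s) :: R)) =
      base (corner ε i s) * (uPow (boolSign s * ℓ) * t)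

theorem beginsRun_one {m : ℕ} {i : Fin r} {s : Bool} {R : List ((Fin r ⊕ Unit) × Bool)}
    (h : Amalgam.IsTail (base (-corner ε i (!s)) * hom ε (m + 2) (FreeGroup.mk R))) :
    BeginsRun ε m i s 1 R where
  pos := one_pos
  lt := by omega
  arc_prefix k hk := by omega
  exists_tail := ⟨_, h, by
    rw [← List.singleton_append, ← FreeGroup.mul_mk, map_mul, hom_inl, Nat.cast_one, mul_one]
    simp only [mul_assoc]⟩

theorem beginsRun_one_replicate (m : ℕ) (i : Fin r) (s δ : Bool) (k : ℕ) :
    BeginsRun ε m i s 1 (List.replicate k (bLetter δ)) :=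
  beginsRun_one ε <| by
    rw [hom_replicate_bLetter, ← base_add]
    exact isTail_base _

variable {ε} {m : ℕ} {i j : Fin r} {s t δ : Bool} {k ℓ : ℕ} {R : List ((Fin r ⊕ Unit) × Bool)}

theorem BeginsRun.one_of_corner_ne_zero (hR : BeginsRun ε m j t ℓ R)
    (hv : -corner ε i (!s) + (boolSign δ * k, 0) + corner ε j t ≠ 0) :
    BeginsRun ε m i s 1 (List.replicate k (bLetter δ) ++ (Sum.inl j, t) :: R) := by
  obtain ⟨τ, hτ, hR_eq⟩ := hR.exists_tail
  refine beginsRun_one ε ?_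
  rw [← FreeGroup.mul_mk, map_mul, hom_replicate_bLetter, hR_eq, ← mul_assoc, ← mul_assoc,
    ← base_add, ← base_add, ← mul_assoc]
  exact isTail_base_mul_uPow_mul hv hR.pos hR.lt t hτ

theorem hom_cons_turn {τ : ModelGroup r N}
    (hR : hom ε N (FreeGroup.mk ((Sum.inl (nextIndex s i), s) :: R)) =
      base (corner ε (nextIndex s i) s) * τ) :
    hom ε N (FreeGroup.mk ((Sum.inl i, s) ::
      bLetter (turnSign ε s i) :: (Sum.inl (nextIndex s i), s) :: R)) =
        base (corner ε i s) * (uPow (boolSign s) * τ) := by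
  calc _ = hom ε N (FreeGroup.mk [(Sum.inl i, s)]) *
            (hom ε N (FreeGroup.mk (List.replicate 1 (bLetter (turnSign ε s i)))) *
              hom ε N (FreeGroup.mk ((Sum.inl (nextIndex s i), s) :: R))) := by
          simp only [← map_mul, FreeGroup.mul_mk, List.replicate_one, List.singleton_append]
    _ = base (corner ε i s) * uPow (boolSign s) *
          base (-corner ε i (!s) + (boolSign (turnSign ε s i), 0) +
            corner ε (nextIndex s i) s) * τ := by
        rw [hom_inl, hom_replicate_bLetter, hR, Nat.cast_one, mul_one]
        simp only [base_add, mul_assoc]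
    _ = base (corner ε i s) * (uPow (boolSign s) * τ) := by
        rw [corner_turn, base_zero, mul_one, mul_assoc]

theorem BeginsRun.cons (hR : BeginsRun ε m (nextIndex s i) s ℓ R)
    (hfree : ArcFree ε letterWord m
      (bLetter (turnSign ε s i) :: (Sum.inl (nextIndex s i), s) :: R)) :
    BeginsRun ε m i s (ℓ + 1)
      (bLetter (turnSign ε s i) :: (Sum.inl (nextIndex s i), s) :: R) := by
  have hprefix : ∀ k, k + 2 ≤ ℓ + 1 → relatorArc ε letterWord s i k <+:
      bLetter (turnSign ε s i) :: (Sum.inl (nextIndex s i), s) :: R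
    | 0, _ => by simp [relatorArc]
    | k + 1, hk => by
      simpa [relatorArc, embedWord_signedWord_letterWord] using hR.arc_prefix k (by omega)
  refine ⟨ℓ.succ_pos, ?_, hprefix, ?_⟩
  · refine lt_of_le_of_ne (Nat.succ_le_of_lt hR.lt) fun hℓ => ?_
    exact hfree s i (hprefix m hℓ.ge).isInfix
  · obtain ⟨τ, hτ, hR_eq⟩ := hR.exists_tail
    have hsucc : boolSign s * ((ℓ + 1 : ℕ) : ℤ) = boolSign s + boolSign s * ℓ := by
      push_cast
      ring
    exact ⟨τ, hτ, by rw [hom_cons_turn hR_eq, hsucc, uPow_add, mul_assoc]⟩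

theorem eq_one_and_eq_of_boolSign_mul_eq {δ δ' : Bool} {k : ℕ}
    (h : boolSign δ * k = boolSign δ') : k = 1 ∧ δ = δ' := by
  cases δ <;> cases δ' <;> simp [boolSign] at h ⊢ <;> omega

theorem BeginsRun.exists_beginsRun_append (hR : BeginsRun ε m j t ℓ R)
    (hred : FreeGroup.IsReduced
      ((Sum.inl i, s) :: (List.replicate k (bLetter δ) ++ (Sum.inl j, t) :: R)))
    (hfree : ArcFree ε letterWord m (List.replicate k (bLetter δ) ++ (Sum.inl j, t) :: R)) :
    ∃ ℓ', BeginsRun ε m i s ℓ' (List.replicate k (bLetter δ) ++ (Sum.inl j, t) :: R) := by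
  by_cases hv : -corner ε i (!s) + (boolSign δ * k, 0) + corner ε j t = 0
  · obtain ⟨rfl, rfl, hb⟩ | ⟨rfl, rfl, hb⟩ := corner_merge ε hv
    · obtain ⟨rfl, rfl⟩ := eq_one_and_eq_of_boolSign_mul_eq hb
      exact ⟨ℓ + 1, hR.cons hfree⟩
    · obtain rfl : k = 0 := by cases δ <;> simpa [boolSign] using hb
      have hcancel := (FreeGroup.isReduced_cons_cons.1 hred).1 rfl
      simp at hcancel
  · exact ⟨1, hR.one_of_corner_ne_zero hv⟩

theorem exists_replicate_append_beginsRun (hred : FreeGroup.IsReduced R)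
    (hfree : ArcFree ε letterWord m R) :
    ∃ k δ R', R = List.replicate k (bLetter δ) ++ R' ∧
      (R' = [] ∨ ∃ i s ℓ R'', R' = (Sum.inl i, s) :: R'' ∧ BeginsRun ε m i s ℓ R'') := by
  induction R with
  | nil => exact ⟨0, true, [], rfl, Or.inl rfl⟩
  | cons a R ih =>
    obtain ⟨k, δ, R', rfl, hR'⟩ := ih (hred.infix (List.suffix_cons a R).isInfix)
      (hfree.infix (List.suffix_cons a R).isInfix)
    obtain ⟨i | ⟨⟨⟩⟩, s⟩ := a
    · refine ⟨0, true, _, rfl, Or.inr ⟨i, s, ?_⟩⟩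
      suffices ∃ ℓ, BeginsRun ε m i s ℓ (List.replicate k (bLetter δ) ++ R') from
        this.imp fun ℓ h => ⟨_, rfl, h⟩
      obtain rfl | ⟨j, t, ℓ, R, rfl, hR⟩ := hR'
      · exact ⟨1, by simpa using beginsRun_one_replicate ε m i s δ k⟩
      · exact hR.exists_beginsRun_append hred (hfree.infix (List.suffix_cons _ _).isInfix)
    · rcases k with _ | k
      · exact ⟨1, s, R', rfl, hR'⟩
      · obtain rfl : s = δ := (FreeGroup.isReduced_cons_cons.1 hred).1 rfl
        exact ⟨k + 2, s, R', rfl, hR'⟩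

theorem hom_ne_one (hR : R ≠ []) (hred : FreeGroup.IsReduced R)
    (hfree : ArcFree ε letterWord m R) : hom ε (m + 2) (FreeGroup.mk R) ≠ 1 := by
  obtain ⟨k, δ, R', rfl, rfl | ⟨i, s, ℓ, R'', rfl, hrun⟩⟩ :=
    exists_replicate_append_beginsRun hred hfree
  · rw [List.append_nil, hom_replicate_bLetter, ← base_zero (r := r)]
    intro h
    have hk := congrArg Prod.fst (base_injective h)
    cases δ <;> simp_all [boolSign]
  · obtain ⟨τ, hτ, heq⟩ := hrun.exists_tail
    rw [← FreeGroup.mul_mk, map_mul, hom_replicate_bLetter, heq, ← mul_assoc, ← base_add]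
    intro h
    exact uPow_mul_ne_base hrun.pos hrun.lt s hτ _
      ((eq_inv_of_mul_eq_one_right h).trans (base_neg _).symm)

theorem hom_relatorSegment_letterWord (i : Fin r) :
    hom ε N (FreeGroup.mk (relatorSegment ε letterWord i)) =
      base (0, -i) * uPow 1 * base (0, i + 1) := by
  have hsplit : relatorSegment ε letterWord i =
      List.replicate 1 (bLetter (ε i)) ++ [(Sum.inl i, true)] := rfl
  rw [hsplit, ← FreeGroup.mul_mk, map_mul, hom_replicate_bLetter, hom_inl, ← mul_assoc, ← mul_assoc,
    ← base_add]
  simp [corner, boolSign]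

theorem hom_relatorPath_letterWord (i : Fin r) (q : ℕ) :
    hom ε N (FreeGroup.mk (relatorPath ε letterWord i q)) =
      base (0, -i) * uPow q * base (0, (· + 1)^[q] i) := by
  induction q generalizing i with
  | zero =>
    rw [relatorPath, List.iterate, List.flatMap_nil, ← FreeGroup.one_eq_mk, map_one,
      Function.iterate_zero_apply, Nat.cast_zero, uPow_zero, mul_one, ← base_add, Prod.mk_add_mk,
      neg_add_cancel, add_zero, ← Prod.zero_eq_mk, base_zero]
  | succ q ih =>
    rw [relatorPath_succ, ← FreeGroup.mul_mk, map_mul, ih, hom_relatorSegment_letterWord]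
    calc _ = base (0, -i) * uPow 1 * (base (0, i + 1) * base (0, -(i + 1))) * uPow q *
              base (0, (· + 1)^[q] (i + 1)) := by simp only [mul_assoc]
      _ = base (0, -i) * (uPow 1 * uPow q) * base (0, (· + 1)^[q] (i + 1)) := by
          rw [← base_add, Prod.mk_add_mk, add_neg_cancel, add_zero, ← Prod.zero_eq_mk, base_zero,
            mul_one, mul_assoc (base (0, -i))]
      _ = base (0, -i) * uPow (q + 1 : ℕ) * base (0, (· + 1)^[q + 1] i) := by
          rw [← uPow_add, Nat.cast_succ, add_comm 1, Function.iterate_succ_apply]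

theorem hom_relatorWord_letterWord_pow (n : ℕ) :
    hom ε (n * r) (FreeGroup.mk (relatorWord ε letterWord) ^ n) = 1 := by
  have hu : (uPow (n * r : ℕ) : ModelGroup r (n * r)) = 1 := by
    rw [uPow, Int.cast_natCast, ZMod.natCast_self, ofAdd_zero, map_one]
  calc _ = hom ε (n * r) (FreeGroup.mk (wordPow (relatorWord ε letterWord) n)) := by
        rw [FreeGroup.pow_mk, wordPow]
    _ = base (0, -0) * 1 * base (0, 0) := by
        rw [wordPow_relatorWord, hom_relatorPath_letterWord, add_one_iterate_mul_card, hu]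
    _ = 1 := by
        rw [mul_one, neg_zero, ← Prod.zero_eq_mk, base_zero, mul_one]

end ModelGroup

/-! ### Lifting words to the model alphabet -/

section Lifting

theorem eq_of_mk_eq_of_isReduced {α : Type*} {v w : List (α × Bool)} (hv : FreeGroup.IsReduced v)
    (hw : FreeGroup.IsReduced w) (h : FreeGroup.mk v = FreeGroup.mk w) : v = w := by
  classical rw [← hv.reduce_eq, ← hw.reduce_eq, FreeGroup.reduce.sound h]

variable {α : Type*} {r : ℕ} {W : Fin r → List (α × Bool)}

theorem mk_embedWord {β : Type*} (f : α → β) (w : List (α × Bool)) :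
    FreeGroup.mk (embedWord f w) = FreeGroup.map f (FreeGroup.mk w) :=
  rfl

theorem isReduced_embedWord_inl {w : List (α × Bool)} (hw : FreeGroup.IsReduced w) :
    FreeGroup.IsReduced (embedWord Sum.inl w : List ((α ⊕ Unit) × Bool)) := by
  simpa [FreeGroup.IsReduced, embedWord, List.isChain_map] using hw

theorem isReduced_signedWord {w : List (α × Bool)} (hw : FreeGroup.IsReduced w) (s : Bool) :
    FreeGroup.IsReduced (signedWord s w) := by
  cases s
  · classical
    rw [signedWord, FreeGroup.isReduced_iff_reduce_eq, FreeGroup.reduce_invRev, hw.reduce_eq]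
  · exact hw

theorem isReduced_of_embedWord_inl {w : List (α × Bool)}
    (hw : FreeGroup.IsReduced (embedWord Sum.inl w : List ((α ⊕ Unit) × Bool))) :
    FreeGroup.IsReduced w := by
  simpa [FreeGroup.IsReduced, embedWord, List.isChain_map] using hw

theorem isReduced_bLetter_cons_embedWord_append {δ : Bool} {κ : List (α × Bool)}
    {R : List ((α ⊕ Unit) × Bool)} (hκ : FreeGroup.IsReduced κ) (hR : FreeGroup.IsReduced R)
    (hhead : ∀ x ∈ R.head?, x.1 = Sum.inr () ∧ (κ = [] → x.2 = δ)) :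
    FreeGroup.IsReduced (bLetter δ :: (embedWord Sum.inl κ ++ R)) := by
  refine List.isChain_cons.2 ⟨fun x hx hδ => ?_, List.isChain_append.2
    ⟨isReduced_embedWord_inl hκ, hR, fun x hx y hy hxy => ?_⟩⟩
  · rcases κ with _ | ⟨c, κ⟩
    · exact ((hhead x hx).2 rfl).symm
    · obtain rfl : (Sum.inl c.1, c.2) = x := by simpa [embedWord] using hx
      simp [bLetter] at hδ
  · obtain ⟨c, -, rfl⟩ := List.mem_map.1 (List.mem_of_mem_getLast? hx)
    simp [(hhead y hy).1] at hxy

theorem bLetter_cons_infix_of_infix_embedWord_append {δ : Bool} {κ : List (α × Bool)}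
    {R L : List ((α ⊕ Unit) × Bool)} (h : bLetter δ :: L <:+: embedWord Sum.inl κ ++ R) :
    bLetter δ :: L <:+: R := by
  induction κ with
  | nil => exact h
  | cons x κ ih =>
    refine ih ((List.infix_cons_iff.1 h).resolve_left fun hpre => ?_)
    simpa [bLetter] using (List.cons_prefix_cons.1 hpre).1

/-- The words `b^δ R`, over the alphabet `x_1, …, x_r, b`, and `b^δ P` have the same exponents of
`b` as long as `R` lasts, and up to the last `b` of `R` the substitution `x_i ↦ W_i` takes the
reduced words between the letters `b` of `b^δ R` to those of `b^δ P`. The leading letter `b^δ` is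
left out, so that the words can be extended on the left. -/
inductive IsPartialLift (W : Fin r → List (α × Bool)) :
    List ((Fin r ⊕ Unit) × Bool) → List ((α ⊕ Unit) × Bool) → Prop
  | last {κ : List (Fin r × Bool)} (P : List ((α ⊕ Unit) × Bool)) (hκ : FreeGroup.IsReduced κ) :
      IsPartialLift W (embedWord Sum.inl κ) P
  | cons {κ : List (Fin r × Bool)} {V : List (α × Bool)} {R : List ((Fin r ⊕ Unit) × Bool)}
      {P : List ((α ⊕ Unit) × Bool)} (δ : Bool) (hκ : FreeGroup.IsReduced κ)
      (hV : FreeGroup.IsReduced V)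
      (hκV : FreeGroup.lift (fun i => FreeGroup.mk (W i)) (FreeGroup.mk κ) = FreeGroup.mk V)
      (hRP : IsPartialLift W R P) :
      IsPartialLift W (embedWord Sum.inl κ ++ bLetter δ :: R)
        (embedWord Sum.inl V ++ bLetter δ :: P)

theorem lift_mk_signedWord_letterWord (W : Fin r → List (α × Bool)) (s : Bool) (i : Fin r) :
    FreeGroup.lift (fun i => FreeGroup.mk (W i)) (FreeGroup.mk (signedWord s (letterWord i))) =
      FreeGroup.mk (signedWord s (W i)) := by
  cases s <;> simp [signedWord, letterWord, FreeGroup.invRev, FreeGroup.inv_mk]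

variable {R : List ((Fin r ⊕ Unit) × Bool)} {P : List ((α ⊕ Unit) × Bool)} {δ : Bool}

theorem IsPartialLift.isReduced (h : IsPartialLift W R P)
    (hP : FreeGroup.IsReduced (bLetter δ :: P)) : FreeGroup.IsReduced (bLetter δ :: R) := by
  induction h generalizing δ with
  | last P hκ =>
    simpa using
      isReduced_bLetter_cons_embedWord_append (R := []) hκ FreeGroup.IsReduced.nil (by simp)
  | @cons κ V R P δ' hκ hV hκV _ ih =>
    have hsuffix : bLetter δ' :: P <:+ bLetter δ :: (embedWord Sum.inl V ++ bLetter δ' :: P) :=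
      (List.suffix_append (bLetter δ :: embedWord Sum.inl V) _)
    refine isReduced_bLetter_cons_embedWord_append hκ (ih (hP.infix hsuffix.isInfix)) ?_
    simp only [List.head?_cons, Option.mem_some_iff, forall_eq', bLetter, true_and]
    rintro rfl
    obtain rfl : V = [] := eq_of_mk_eq_of_isReduced hV FreeGroup.IsReduced.nil hκV.symm
    exact ((FreeGroup.isReduced_cons_cons.1 hP).1 rfl).symm

variable [NeZero r] {ε : Fin r → Bool} {m : ℕ}

theorem relatorArc_zero_prefix_iff {s : Bool} {i : Fin r} :
    relatorArc ε W s i 0 <+: bLetter δ :: P ↔ turnSign ε s i = δ := by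
  simp [relatorArc, List.cons_prefix_cons, bLetter]

theorem relatorArc_letterWord_succ_prefix {κ : List (Fin r × Bool)} {s : Bool} {i : Fin r}
    (hhead : ∀ x ∈ R.head?, x.1 = Sum.inr ())
    (h : relatorArc ε letterWord s i (m + 1) <+: bLetter δ :: (embedWord Sum.inl κ ++ R)) :
    turnSign ε s i = δ ∧ κ = [(nextIndex s i, s)] ∧
      relatorArc ε letterWord s (nextIndex s i) m <+: R := by
  obtain ⟨L, hL⟩ := exists_relatorArc_eq_cons ε letterWord s (nextIndex s i) m
  rw [relatorArc, embedWord_signedWord_letterWord, List.cons_prefix_cons] at h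
  obtain ⟨hδ, h⟩ := h
  refine ⟨by simpa [bLetter] using hδ, ?_⟩
  rw [hL] at h ⊢
  rcases κ with _ | ⟨c, _ | ⟨c', κ⟩⟩
  · obtain ⟨T, rfl⟩ := h
    simpa using hhead _ rfl
  · simp only [embedWord, List.map_cons, List.map_nil, List.singleton_append,
      List.cons_prefix_cons, Prod.mk.injEq, Sum.inl.injEq] at h
    exact ⟨by rw [h.1.1, h.1.2], h.2⟩
  · simp [embedWord, bLetter] at h

theorem IsPartialLift.relatorArc_prefix (hW : ∀ i, FreeGroup.IsReduced (W i))
    (h : IsPartialLift W R P) {s : Bool} {i : Fin r}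
    (harc : relatorArc ε letterWord s i m <+: bLetter δ :: R) :
    relatorArc ε W s i m <+: bLetter δ :: P := by
  induction h generalizing δ i m with
  | @last κ P _ =>
    rcases m with _ | m
    · rwa [relatorArc_zero_prefix_iff] at harc ⊢
    · rw [← List.append_nil (embedWord _ _)] at harc
      obtain ⟨-, -, hnil⟩ := relatorArc_letterWord_succ_prefix (by simp) harc
      obtain ⟨L, hL⟩ := exists_relatorArc_eq_cons ε letterWord s (nextIndex s i) m
      simp [hL] at hnil
  | @cons κ V R P δ' _ hV hκV _ ih =>
    rcases m with _ | m
    · rwa [relatorArc_zero_prefix_iff] at harc ⊢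
    · obtain ⟨rfl, rfl, htail⟩ := relatorArc_letterWord_succ_prefix (by simp [bLetter]) harc
      have hVW : V = signedWord s (W (nextIndex s i)) :=
        eq_of_mk_eq_of_isReduced hV (isReduced_signedWord (hW _) s) <| by
          rw [← hκV, ← lift_mk_signedWord_letterWord]
          cases s <;> rfl
      rw [hVW, relatorArc, List.cons_prefix_cons]
      exact ⟨rfl, (List.prefix_append_right_inj _).2 (ih htail)⟩

theorem IsPartialLift.arcFree (hW : ∀ i, FreeGroup.IsReduced (W i)) (h : IsPartialLift W R P)
    (hP : ArcFree ε W m (bLetter δ :: P)) : ArcFree ε letterWord m (bLetter δ :: R) := by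
  intro s i harc
  obtain ⟨L, hL⟩ := exists_relatorArc_eq_cons ε letterWord s i m
  induction h generalizing δ with
  | @last κ P hκ =>
    obtain hpre | hinf := List.infix_cons_iff.1 harc
    · exact hP s i ((IsPartialLift.last P hκ).relatorArc_prefix hW hpre).isInfix
    · rw [hL, ← List.append_nil (embedWord _ _)] at hinf
      simpa using bLetter_cons_infix_of_infix_embedWord_append hinf
  | @cons κ V R P δ' hκ hV hκV hRP ih =>
    obtain hpre | hinf := List.infix_cons_iff.1 harc
    · exact hP s i ((hRP.cons δ' hκ hV hκV).relatorArc_prefix hW hpre).isInfix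
    · have hsuffix : bLetter δ' :: P <:+ bLetter δ :: (embedWord Sum.inl V ++ bLetter δ' :: P) :=
        (List.suffix_append (bLetter δ :: embedWord Sum.inl V) _)
      refine ih (hP.infix hsuffix.isInfix) ?_
      rw [hL] at hinf ⊢
      exact bLetter_cons_infix_of_infix_embedWord_append hinf

end Lifting

/-! ### Gluing the free group to the model -/

section Gluing

universe u

variable {α E : Type u} [Group E] {r : ℕ}

/-- The homomorphism from the free group of rank `r` that sends the `i`-th generator to `W i`. -/
def wordsHom (W : Fin r → List (α × Bool)) : FreeGroup (Fin r) →* FreeGroup α :=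
  FreeGroup.lift fun i => FreeGroup.mk (W i)

/-- The restriction to the free group on `x_1, …, x_r` of a homomorphism interpreting
`x_1, …, x_r, b`. -/
def lettersHom (χ : FreeGroup (Fin r ⊕ Unit) →* E) : FreeGroup (Fin r) →* E :=
  χ.comp (FreeGroup.map Sum.inl)

/-- The homomorphism that interprets the letters of `α` in the left factor of the amalgamated
product along `x_i ↦ W i` and `x_i ↦ χ x_i`, and the letter `b` as `χ b` in the right factor. -/
def gluedHom (W : Fin r → List (α × Bool)) (χ : FreeGroup (Fin r ⊕ Unit) →* E) :
    FreeGroup (α ⊕ Unit) →* Amalgam (wordsHom W) (lettersHom χ) :=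
  FreeGroup.lift (Sum.elim (fun a => Amalgam.inl (FreeGroup.of a))
    fun _ => Amalgam.inr (χ (FreeGroup.of (Sum.inr ()))))

variable {W : Fin r → List (α × Bool)} {χ : FreeGroup (Fin r ⊕ Unit) →* E}

theorem gluedHom_map_inl (g : FreeGroup α) :
    gluedHom W χ (FreeGroup.map Sum.inl g) = Amalgam.inl g := by
  have h : (gluedHom W χ).comp (FreeGroup.map Sum.inl) = Amalgam.inl :=
    FreeGroup.ext_hom _ _ fun a => by simp [gluedHom]
  exact DFunLike.congr_fun h g

theorem gluedHom_bLetter (δ : Bool) :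
    gluedHom W χ (FreeGroup.mk [bLetter δ]) = Amalgam.inr (χ (FreeGroup.mk [bLetter δ])) := by
  have hb : gluedHom W χ (FreeGroup.of (Sum.inr ())) =
      Amalgam.inr (χ (FreeGroup.of (Sum.inr ()))) := by simp [gluedHom]
  cases δ
  · change gluedHom W χ (FreeGroup.of (Sum.inr ()))⁻¹ =
      Amalgam.inr (χ (FreeGroup.of (Sum.inr ()))⁻¹)
    rw [map_inv, map_inv, map_inv, hb]
  · exact hb

theorem mk_bLetter_cons_embedWord_append {β : Type*} (δ : Bool) (V : List (β × Bool))
    (P : List ((β ⊕ Unit) × Bool)) :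
    FreeGroup.mk (bLetter δ :: (embedWord Sum.inl V ++ P)) =
      FreeGroup.mk [bLetter δ] * (FreeGroup.map Sum.inl (FreeGroup.mk V) * FreeGroup.mk P) := by
  rw [← mk_embedWord, FreeGroup.mul_mk, FreeGroup.mul_mk, List.singleton_append]

theorem gluedHom_bLetter_cons_embedWord_append (δ : Bool) (V : List (α × Bool))
    (P : List ((α ⊕ Unit) × Bool)) :
    gluedHom W χ (FreeGroup.mk (bLetter δ :: (embedWord Sum.inl V ++ P))) =
      Amalgam.inr (χ (FreeGroup.mk [bLetter δ])) *
        (Amalgam.inl (FreeGroup.mk V) * gluedHom W χ (FreeGroup.mk P)) := by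
  rw [mk_bLetter_cons_embedWord_append, map_mul, map_mul, gluedHom_bLetter, gluedHom_map_inl]

/-- The word `b^δ P` starts with `b^δ R` up to a substitution `x_i ↦ W i`, in such a way that its
image under `gluedHom` is the product of the image of `b^δ R` with a tail; the word `R` may be
continued by any reduced word in `x_1, …, x_r`. -/
structure HasLiftedHead (W : Fin r → List (α × Bool)) (χ : FreeGroup (Fin r ⊕ Unit) →* E)
    (δ : Bool) (P : List ((α ⊕ Unit) × Bool)) (R : List ((Fin r ⊕ Unit) × Bool)) : Prop where
  isPartialLift : ∀ κ : List (Fin r × Bool), FreeGroup.IsReduced κ →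
    IsPartialLift W (R ++ embedWord Sum.inl κ) P
  exists_tail : ∃ t : Amalgam (wordsHom W) (lettersHom χ), Amalgam.IsTail t ∧
    gluedHom W χ (FreeGroup.mk (bLetter δ :: P)) =
      Amalgam.inr (χ (FreeGroup.mk (bLetter δ :: R))) * t

theorem hasLiftedHead_embedWord (δ : Bool) (V : List (α × Bool)) :
    HasLiftedHead W χ δ (embedWord Sum.inl V) [] where
  isPartialLift κ hκ := IsPartialLift.last _ hκ
  exists_tail := ⟨_, Amalgam.isTail_inl (FreeGroup.mk V), by
    have h := gluedHom_bLetter_cons_embedWord_append (W := W) (χ := χ) δ V []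
    rwa [← FreeGroup.one_eq_mk, map_one, mul_one, List.append_nil] at h⟩

variable {δ δ' : Bool} {V : List (α × Bool)} {P : List ((α ⊕ Unit) × Bool)}
  {R : List ((Fin r ⊕ Unit) × Bool)}

theorem HasLiftedHead.cons_of_mem (h : HasLiftedHead W χ δ' P R) (hV : FreeGroup.IsReduced V)
    {κ : List (Fin r × Bool)} (hκ : FreeGroup.IsReduced κ)
    (hκV : wordsHom W (FreeGroup.mk κ) = FreeGroup.mk V) (δ : Bool) :
    HasLiftedHead W χ δ (embedWord Sum.inl V ++ bLetter δ' :: P)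
      (embedWord Sum.inl κ ++ bLetter δ' :: R) where
  isPartialLift κ' hκ' := by
    simpa using (h.isPartialLift κ' hκ').cons δ' hκ hV hκV
  exists_tail := by
    obtain ⟨t, ht, hP⟩ := h.exists_tail
    refine ⟨t, ht, ?_⟩
    rw [gluedHom_bLetter_cons_embedWord_append, mk_bLetter_cons_embedWord_append, hP, ← hκV,
      Amalgam.inl_apply_eq_inr_apply, map_mul, map_mul, map_mul, map_mul]
    simp only [mul_assoc]
    rfl

theorem HasLiftedHead.cons_of_notMem (h : HasLiftedHead W χ δ' P R)
    (hV : FreeGroup.mk V ∉ (wordsHom W).range)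
    (hR : χ (FreeGroup.mk (bLetter δ' :: R)) ∉ (lettersHom χ).range) (δ : Bool) :
    HasLiftedHead W χ δ (embedWord Sum.inl V ++ bLetter δ' :: P) [] where
  isPartialLift κ hκ := IsPartialLift.last _ hκ
  exists_tail := by
    obtain ⟨t, ht, hP⟩ := h.exists_tail
    refine ⟨_, ht.inl_mul_inr_mul hV hR, ?_⟩
    rw [gluedHom_bLetter_cons_embedWord_append, hP]
    simp only [mul_assoc]

theorem gluedHom_relatorWord (ε : Fin r → Bool) :
    gluedHom W χ (FreeGroup.mk (relatorWord ε W)) =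
      Amalgam.inr (χ (FreeGroup.mk (relatorWord ε letterWord))) := by
  rw [relatorWord, relatorWord]
  induction List.finRange r with
  | nil => simp only [List.map_nil, List.flatten_nil, ← FreeGroup.one_eq_mk, map_one]
  | cons i l ih =>
    have hi : FreeGroup.mk (W i) = wordsHom W (FreeGroup.mk (letterWord i)) := by
      simp [wordsHom, letterWord]
    simp only [List.map_cons, List.flatten_cons, relatorSegment, List.cons_append]
    rw [gluedHom_bLetter_cons_embedWord_append, mk_bLetter_cons_embedWord_append, ih, map_mul,
      map_mul, map_mul, map_mul, hi, Amalgam.inl_apply_eq_inr_apply]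
    rfl

variable [NeZero r] {ε : Fin r → Bool} {m : ℕ}

/-- The homomorphism `χ` maps no nonempty reduced word without arcs with `m + 1` letters `b` to the
identity. This is all that gluing needs to know about the model. -/
def FaithfulOnArcFree (ε : Fin r → Bool) (m : ℕ) (χ : FreeGroup (Fin r ⊕ Unit) →* E) : Prop :=
  ∀ R : List ((Fin r ⊕ Unit) × Bool), R ≠ [] → FreeGroup.IsReduced R →
    ArcFree ε letterWord m R → χ (FreeGroup.mk R) ≠ 1

theorem lettersHom_injective (hχ : FaithfulOnArcFree ε m χ) :
    Function.Injective (lettersHom χ) := by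
  classical
  refine (injective_iff_map_eq_one _).2 fun k hk => by_contra fun hne => ?_
  refine hχ (embedWord Sum.inl k.toWord) ?_ (isReduced_embedWord_inl FreeGroup.isReduced_toWord)
    (fun s i harc => ?_) ?_
  · simpa [embedWord] using hne
  · obtain ⟨L, hL⟩ := exists_relatorArc_eq_cons ε letterWord s i m
    rw [hL, ← List.append_nil (embedWord _ _)] at harc
    simpa using bLetter_cons_infix_of_infix_embedWord_append harc
  · rwa [mk_embedWord, FreeGroup.mk_toWord]

theorem HasLiftedHead.notMem_range
    (hχ : FaithfulOnArcFree ε m χ)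
    (hW : ∀ i, FreeGroup.IsReduced (W i)) (h : HasLiftedHead W χ δ P R)
    (hred : FreeGroup.IsReduced (bLetter δ :: P)) (hfree : ArcFree ε W m (bLetter δ :: P)) :
    χ (FreeGroup.mk (bLetter δ :: R)) ∉ (lettersHom χ).range := by
  classical
  rintro ⟨k, hk⟩
  have hlift := h.isPartialLift k⁻¹.toWord FreeGroup.isReduced_toWord
  refine hχ _ (List.cons_ne_nil _ _) (hlift.isReduced hred) (hlift.arcFree hW hfree) ?_
  rw [← List.cons_append, ← FreeGroup.mul_mk, map_mul, ← hk, mk_embedWord, FreeGroup.mk_toWord]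
  exact (map_mul (lettersHom χ) k k⁻¹).symm.trans (by rw [mul_inv_cancel, map_one])

theorem exists_hasLiftedHead_bLetter_cons
    (hχ : FaithfulOnArcFree ε m χ)
    (hW : ∀ i, FreeGroup.IsReduced (W i)) (hV : FreeGroup.IsReduced V)
    (h : HasLiftedHead W χ δ' P R)
    (hred : FreeGroup.IsReduced (bLetter δ' :: P)) (hfree : ArcFree ε W m (bLetter δ' :: P))
    (δ : Bool) : ∃ R', HasLiftedHead W χ δ (embedWord Sum.inl V ++ bLetter δ' :: P) R' := by
  classical
  by_cases hmem : FreeGroup.mk V ∈ (wordsHom W).range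
  · obtain ⟨k, hk⟩ := hmem
    have hkV : wordsHom W (FreeGroup.mk k.toWord) = FreeGroup.mk V := by rwa [FreeGroup.mk_toWord]
    exact ⟨_, h.cons_of_mem hV FreeGroup.isReduced_toWord hkV δ⟩
  · exact ⟨_, h.cons_of_notMem hmem (h.notMem_range hχ hW hred hfree) δ⟩

theorem exists_embedWord_append_hasLiftedHead
    (hχ : FaithfulOnArcFree ε m χ)
    (hW : ∀ i, FreeGroup.IsReduced (W i)) (hred : FreeGroup.IsReduced P)
    (hfree : ArcFree ε W m P) :
    ∃ V P', P = embedWord Sum.inl V ++ P' ∧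
      (P' = [] ∨ ∃ δ P'' R, P' = bLetter δ :: P'' ∧ HasLiftedHead W χ δ P'' R) := by
  induction P with
  | nil => exact ⟨[], [], rfl, Or.inl rfl⟩
  | cons c P ih =>
    have hsuffix : P <:+: c :: P := (List.suffix_cons c P).isInfix
    obtain ⟨V, P', rfl, hP'⟩ := ih (hred.infix hsuffix) (hfree.infix hsuffix)
    obtain ⟨a | ⟨⟨⟩⟩, δ⟩ := c
    · exact ⟨(a, δ) :: V, P', rfl, hP'⟩
    · refine ⟨[], _, rfl, Or.inr ⟨δ, embedWord Sum.inl V ++ P', ?_⟩⟩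
      suffices ∃ R, HasLiftedHead W χ δ (embedWord Sum.inl V ++ P') R from
        this.imp fun R hR => ⟨rfl, hR⟩
      have hV : FreeGroup.IsReduced V := isReduced_of_embedWord_inl <|
        hred.infix ((List.prefix_append (embedWord Sum.inl V) P').isInfix.trans hsuffix)
      obtain rfl | ⟨δ', P'', R, rfl, hR⟩ := hP'
      · exact ⟨[], by simpa using hasLiftedHead_embedWord δ V⟩
      · have hinfix := (List.suffix_append (embedWord Sum.inl V) (bLetter δ' :: P'')).isInfix.trans
          hsuffix
        exact exists_hasLiftedHead_bLetter_cons hχ hW hV hR (hred.infix hinfix)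
          (hfree.infix hinfix) δ

theorem gluedHom_ne_one
    (hχ : FaithfulOnArcFree ε m χ)
    (hW : ∀ i, FreeGroup.IsReduced (W i)) (hinj : Function.Injective (wordsHom W))
    (hP : P ≠ []) (hred : FreeGroup.IsReduced P) (hfree : ArcFree ε W m P) :
    gluedHom W χ (FreeGroup.mk P) ≠ 1 := by
  obtain ⟨V, P', rfl, hP'⟩ := exists_embedWord_append_hasLiftedHead hχ hW hred hfree
  rw [← FreeGroup.mul_mk, map_mul, mk_embedWord, gluedHom_map_inl]
  obtain rfl | ⟨δ, P'', R, rfl, hR⟩ := hP'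
  · rw [List.append_nil] at hP hred
    rw [← FreeGroup.one_eq_mk, map_one, mul_one]
    intro h
    have hV : V = [] := eq_of_mk_eq_of_isReduced (isReduced_of_embedWord_inl hred)
      FreeGroup.IsReduced.nil
      (Amalgam.inl_injective hinj (lettersHom_injective hχ) (h.trans (map_one _).symm))
    exact hP (by rw [hV]; rfl)
  · have hinfix := (List.suffix_append (embedWord Sum.inl V) (bLetter δ :: P'')).isInfix
    obtain ⟨t, ht, heq⟩ := hR.exists_tail
    intro h
    refine ht.inr_mul_notMem_range_inl hinj (lettersHom_injective hχ)
      (hR.notMem_range hχ hW (hred.infix hinfix) (hfree.infix hinfix)) ?_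
    rw [← heq, ← Subgroup.mul_mem_cancel_left _ (MonoidHom.mem_range.2 ⟨FreeGroup.mk V, rfl⟩), h]
    exact one_mem _

end Gluing

/-! ### The spelling theorem -/

theorem exists_faithfulOnArcFree.{u} {r n m : ℕ} [NeZero r] (ε : Fin r → Bool)
    (hm : n * r = m + 2) :
    ∃ (E : Type u) (_ : Group E) (χ : FreeGroup (Fin r ⊕ Unit) →* E),
      FaithfulOnArcFree ε m χ ∧ χ (FreeGroup.mk (relatorWord ε letterWord) ^ n) = 1 := by
  refine ⟨ULift (ModelGroup r (m + 2)), inferInstance,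
    MulEquiv.ulift.symm.toMonoidHom.comp (ModelGroup.hom ε (m + 2)), ?_, ?_⟩
  · intro R hR hred hfree h
    exact ModelGroup.hom_ne_one hR hred hfree (congrArg ULift.down h)
  · rw [← hm]
    exact congrArg ULift.up (ModelGroup.hom_relatorWord_letterWord_pow n)

theorem exists_relatorArc_infix_of_mem_normalClosure.{u} {α : Type u} {r n m : ℕ} [NeZero r]
    {ε : Fin r → Bool} {W : Fin r → List (α × Bool)} (hm : n * r = m + 2)
    (hW : ∀ i, FreeGroup.IsReduced (W i)) (hinj : Function.Injective (wordsHom W))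
    {P : List ((α ⊕ Unit) × Bool)} (hP : P ≠ []) (hred : FreeGroup.IsReduced P)
    (hmem : FreeGroup.mk P ∈ Subgroup.normalClosure {FreeGroup.mk (relatorWord ε W) ^ n}) :
    ∃ s i, relatorArc ε W s i m <:+: P := by
  by_contra! hfree
  obtain ⟨E, _, χ, hχ, hrel⟩ := exists_faithfulOnArcFree.{u} ε hm
  have hker : FreeGroup.mk (relatorWord ε W) ^ n ∈ (gluedHom W χ).ker := by
    rw [MonoidHom.mem_ker, map_pow, gluedHom_relatorWord, ← map_pow, ← map_pow, hrel, map_one]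
  have hle := Subgroup.normalClosure_le_normal (Set.singleton_subset_iff.2 hker)
  exact gluedHom_ne_one hχ hW hinj hP hred hfree (hle hmem)

theorem wordReduced_iff_isReduced {α : Type*} {w : List (α × Bool)} :
    WordReduced w ↔ FreeGroup.IsReduced w := by
  have hrel : (fun a b : α × Bool => ¬(a.1 = b.1 ∧ a.2 = !b.2)) =
      fun a b => a.1 = b.1 → a.2 = b.2 := by
    ext a b
    simp
  exact iff_of_eq (congrArg (List.IsChain · w) hrel)

theorem one_relator_extreme_spelling_general {α : Type*} {r : ℕ} (n : ℕ) (ε : Fin r → Bool)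
    (W : Fin r → List (α × Bool)) (hred : ∀ i, WordReduced (W i))
    (hfree : Function.Injective (FreeGroup.lift fun i => FreeGroup.mk (W i)))
    (P : List ((α ⊕ Unit) × Bool)) (hPne : P ≠ []) (hPred : WordReduced P)
    (hPtriv : FreeGroup.mk P ∈ Subgroup.normalClosure {FreeGroup.mk (relatorWord ε W) ^ n}) :
    ∃ Q S : List ((α ⊕ Unit) × Bool), Q <:+: P ∧
      ((Q ++ S) ~r wordPow (relatorWord ε W) n ∨
        (Q ++ S) ~r wordInv (wordPow (relatorWord ε W) n)) ∧
      S.countP (·.1.isRight) ≤ 1 := by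
  by_cases hle : n * r ≤ 1
  · exact ⟨[], wordPow (relatorWord ε W) n, List.nil_infix, Or.inl (List.IsRotated.refl _),
      (countP_isRight_wordPow_relatorWord ε W n).trans_le hle⟩
  · obtain ⟨m, hm⟩ : ∃ m, n * r = m + 2 := Nat.exists_eq_add_of_le' (by omega)
    have : NeZero r := ⟨by rintro rfl; omega⟩
    obtain ⟨s, i, harc⟩ := exists_relatorArc_infix_of_mem_normalClosure hm
        (fun i => wordReduced_iff_isReduced.1 (hred i)) hfree hPne
        (wordReduced_iff_isReduced.1 hPred) hPtriv
    obtain ⟨S, hrot, hS⟩ := exists_relatorArc_append_isRotated ε W hm s i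
    exact ⟨_, S, harc, hrot, hS⟩

theorem decide_eq_inr_unit {α : Type*} (x : α ⊕ Unit) [Decidable (x = Sum.inr ())] :
    decide (x = Sum.inr ()) = x.isRight := by
  rcases x with _ | ⟨⟨⟩⟩ <;> simp

/-- **Theorem `thm:1rel-extreme` (spelling part).**  For the one-relator group
`G = ⟨a₁, …, a_p, b ∣ (b^{ε₁} W₁ ⋯ b^{ε_r} W_r)^n⟩`, where each `εᵢ = ±1`, the `Wᵢ`
are nonempty reduced words in the `aᵢ` freely generating a subgroup of the free group
on `a₁, …, a_p`, every nonempty reduced word `P` representing the trivial element of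
`G` contains a subword `Q` such that `Q ++ S` is a cyclic conjugate of `W^{±n}` for
some word `S` in which `b^{±1}` occurs at most once. -/
theorem one_relator_extreme_spelling
    (p r n : ℕ) (hp : 1 ≤ p) (hr : 1 ≤ r) (hn : 1 ≤ n)
    (ε : Fin r → Bool)
    (Wi : Fin r → List (Fin p × Bool))
    (hne : ∀ i, Wi i ≠ []) (hred : ∀ i, WordReduced (Wi i))
    (hfree : Function.Injective
      (FreeGroup.lift (fun i : Fin r => FreeGroup.mk (Wi i)) :
        FreeGroup (Fin r) →* FreeGroup (Fin p)))
    (P : List ((Fin p ⊕ Unit) × Bool)) (hPne : P ≠ []) (hPred : WordReduced P)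
    (hPtriv : FreeGroup.mk P ∈
      Subgroup.normalClosure ({FreeGroup.mk (bWord p r ε Wi) ^ n} :
        Set (FreeGroup (Fin p ⊕ Unit)))) :
    ∃ Q S : List ((Fin p ⊕ Unit) × Bool),
      Q <:+: P ∧
      ((Q ++ S) ~r wordPow (bWord p r ε Wi) n ∨
        (Q ++ S) ~r wordInv (wordPow (bWord p r ε Wi) n)) ∧
      S.countP (fun q => decide (q.1 = (Sum.inr () : Fin p ⊕ Unit))) ≤ 1 := by
  simp only [decide_eq_inr_unit]
  exact one_relator_extreme_spelling_general n ε Wi hred hfree P hPne hPred hPtriv
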